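/- arXiv:2205.14531 — 9 statements merged into one kernel-verified Lean document; each statement's English description precedes it below -/
import Mathlib

section
/- Let n agents each have the same demand d with 0 < d ≤ S, let q = ⌊S/d⌋, and assume q ≤ n. Then there exists a feasible allocation X_1, …, X_n of the interval [0,T] such that λ(X_i) = (q/n)·T for every agent i (so each agent is connected exactly a q/n fraction of the time). -/
open MeasureTheory Set

/-- The `q` agents served in a slot, counted by cyclic offset. -/
lemma card_offset (m q : ℕ) (h : q ≤ m + 1) (f : Fin (m + 1) ≃ Fin (m + 1)) :
    (Finset.univ.filter (fun k : Fin (m + 1) => (f k).val < q)).card = q := by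
  have h1 : (Finset.univ.filter (fun k : Fin (m + 1) => (f k).val < q)).card
      = (Finset.univ.filter (fun k : Fin (m + 1) => k.val < q)).card := by
    apply Finset.card_bij (fun k _ => f k)
    · intro a ha
      simpa using ha
    · intro a _ b _ hab
      exact f.injective hab
    · intro b hb
      exact ⟨f.symm b, by simpa using hb, by simp⟩
  rw [h1, Fin.card_filter_val_lt]
  exact min_eq_right h

/-- Identical demands, uniform utilities: with `n` agents each of demand `d` (`0 < d ≤ S`)
and `q = ⌊S/d⌋ ≤ n`, there is a feasible allocation of `[0,T]` in which every agent is
connected exactly a `q/n` fraction of the time. -/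
theorem identical_demands_uniform_utilities
    (n q : ℕ) (d S T : ℝ)
    (hd : 0 < d) (hdS : d ≤ S) (hT : 0 < T)
    (hq : q = ⌊S / d⌋₊) (hqn : q ≤ n) :
    ∃ X : Fin n → Set ℝ,
      (∀ i, MeasurableSet (X i)) ∧
      (∀ i, X i ⊆ Set.Icc 0 T) ∧
      (∀ t ∈ Set.Icc (0 : ℝ) T, ∑ i, (X i).indicator (fun _ => d) t ≤ S) ∧
      (∀ i, volume (X i) = ENNReal.ofReal ((q : ℝ) / (n : ℝ) * T)) := by
  have hS : 1 ≤ S / d := by rwa [le_div_iff₀ hd, one_mul]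
  have hq1 : 1 ≤ q := by
    rw [hq]
    exact Nat.le_floor (by simpa using hS)
  have hqd : (q : ℝ) * d ≤ S := by
    rw [← le_div_iff₀ hd, hq]
    exact Nat.floor_le (by linarith)
  obtain ⟨m, rfl⟩ : ∃ m, n = m + 1 := ⟨n - 1, by omega⟩
  have hn : (0 : ℝ) < ((m + 1 : ℕ) : ℝ) := by positivity
  obtain ⟨w, hw⟩ : ∃ w : ℝ, w = T / ((m + 1 : ℕ) : ℝ) := ⟨_, rfl⟩
  have hw0 : 0 < w := by rw [hw]; positivity
  have hwT : ((m + 1 : ℕ) : ℝ) * w = T := by rw [hw]; field_simp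
  let I : Fin (m + 1) → Set ℝ := fun k => Set.Ico ((k.val : ℝ) * w) (((k.val : ℝ) + 1) * w)
  have hIu : ∀ t k l, t ∈ I k → t ∈ I l → k = l := by
    intro t k l hk hl
    obtain ⟨a, b⟩ := hk
    obtain ⟨c, e⟩ := hl
    have h1 : (k.val : ℝ) < (l.val : ℝ) + 1 := lt_of_mul_lt_mul_right (a.trans_lt e) hw0.le
    have h2 : (l.val : ℝ) < (k.val : ℝ) + 1 := lt_of_mul_lt_mul_right (c.trans_lt b) hw0.le
    have h1' : k.val < l.val + 1 := by exact_mod_cast h1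
    have h2' : l.val < k.val + 1 := by exact_mod_cast h2
    apply Fin.ext
    omega
  let A : Fin (m + 1) → Finset (Fin (m + 1)) :=
    fun i => Finset.univ.filter (fun k => (k - i).val < q)
  have hA : ∀ i, (A i).card = q := fun i => card_offset m q hqn (Equiv.subRight i)
  refine ⟨fun i => ⋃ k ∈ A i, I k, ?_, ?_, ?_, ?_⟩
  · intro i
    exact Finset.measurableSet_biUnion _ (fun k _ => measurableSet_Ico)
  · intro i t ht
    simp only [Set.mem_iUnion] at ht
    obtain ⟨k, _, h1, h2⟩ := ht
    have hk : (k.val : ℝ) + 1 ≤ ((m + 1 : ℕ) : ℝ) := by exact_mod_cast k.isLt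
    refine ⟨le_trans (by positivity) h1, h2.le.trans ?_⟩
    rw [← hwT]
    exact mul_le_mul_of_nonneg_right hk hw0.le
  · intro t _
    by_cases h : ∃ k, t ∈ I k
    · obtain ⟨k, hk⟩ := h
      have hiff : ∀ i, (t ∈ ⋃ k ∈ A i, I k) ↔ (k - i).val < q := by
        intro i
        simp only [Set.mem_iUnion]
        constructor
        · rintro ⟨l, hl, htl⟩
          rw [hIu t k l hk htl]
          simpa [A] using hl
        · intro hh
          exact ⟨k, by simpa [A] using hh, hk⟩
      have hc := card_offset m q hqn (Equiv.subLeft k)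
      calc ∑ i, (⋃ k ∈ A i, I k).indicator (fun _ => d) t
          = ∑ i, if (k - i).val < q then d else 0 := by
            apply Finset.sum_congr rfl
            intro i _
            classical
            rw [Set.indicator_apply]
            simp only [hiff]
        _ = (q : ℝ) * d := by
            rw [← Finset.sum_filter, Finset.sum_const, nsmul_eq_mul]
            congr 2
        _ ≤ S := hqd
    · rw [Finset.sum_eq_zero]
      · linarith
      · intro i _
        apply Set.indicator_of_notMem
        simp only [Set.mem_iUnion]
        rintro ⟨k, _, hk⟩
        exact h ⟨k, hk⟩
  · intro i
    have hv : ∀ k, volume (I k) = ENNReal.ofReal w := by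
      intro k
      simp only [I, Real.volume_Ico]
      congr 1
      ring
    rw [measure_biUnion_finset]
    · rw [Finset.sum_congr rfl (fun k _ => hv k), Finset.sum_const, hA, nsmul_eq_mul,
        ← ENNReal.ofReal_natCast, ← ENNReal.ofReal_mul (by positivity), hw]
      congr 1
      ring
    · intro k _ l _ hkl
      exact Set.disjoint_left.mpr (fun t hk hl => hkl (hIu t k l hk hl))
    · intro k _
      exact measurableSet_Ico
end

section
/- Let n agents each have the same demand d with 0 < d ≤ S, and let q = ⌊S/d⌋. Then every feasible allocation X_1, …, X_n of [0,T] satisfies min_i λ(X_i) ≤ (q/n)·T; that is, the egalitarian connection-time of any feasible allocation is at most a q/n fraction of the time. -/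
open MeasureTheory Set

/-- Identical demands, uniform utilities, upper bound: with `n` agents each of demand `d`
(`0 < d ≤ S`) and `q = ⌊S/d⌋`, every feasible allocation of `[0,T]` gives some agent
connection time at most a `q/n` fraction of the time. -/
theorem identical_demands_egalitarian_upper_bound
    (n q : ℕ) (hn : 0 < n) (d S T : ℝ)
    (hd : 0 < d) (hdS : d ≤ S) (hT : 0 < T)
    (hq : q = ⌊S / d⌋₊)
    (X : Fin n → Set ℝ)
    (hmeas : ∀ i, MeasurableSet (X i))
    (hsub : ∀ i, X i ⊆ Set.Icc 0 T)
    (hfeas : ∀ t ∈ Set.Icc (0 : ℝ) T, ∑ i, (X i).indicator (fun _ => d) t ≤ S) :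
    ∃ i, volume (X i) ≤ ENNReal.ofReal ((q : ℝ) / (n : ℝ) * T) := by
  classical
  have hpt : ∀ t ∈ Set.Icc (0 : ℝ) T,
      ∑ i, (X i).indicator (fun _ => (1 : ENNReal)) t ≤ (q : ENNReal) := by
    intro t ht
    have h := hfeas t ht
    simp only [Set.indicator_apply, Finset.sum_ite, Finset.sum_const, mul_zero,
      add_zero, nsmul_eq_mul, mul_one] at h ⊢
    have h2 : (Finset.univ.filter (fun i => t ∈ X i)).card ≤ q := by
      rw [hq]
      apply Nat.le_floor
      rw [le_div_iff₀ hd]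
      exact h
    exact_mod_cast h2
  have hsum : ∑ i, volume (X i) ≤ (q : ENNReal) * ENNReal.ofReal T := by
    calc ∑ i, volume (X i)
        = ∑ i, ∫⁻ t in Set.Icc (0 : ℝ) T, (X i).indicator (fun _ => (1 : ENNReal)) t := by
          refine Finset.sum_congr rfl fun i _ => ?_
          rw [lintegral_indicator (hmeas i), setLIntegral_one,
            Measure.restrict_apply (hmeas i), Set.inter_eq_left.2 (hsub i)]
      _ = ∫⁻ t in Set.Icc (0 : ℝ) T, ∑ i, (X i).indicator (fun _ => (1 : ENNReal)) t := by
          rw [lintegral_finsetSum]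
          intro i _
          exact measurable_const.indicator (hmeas i)
      _ ≤ ∫⁻ t in Set.Icc (0 : ℝ) T, (q : ENNReal) :=
          setLIntegral_mono measurable_const hpt
      _ = (q : ENNReal) * ENNReal.ofReal T := by
          rw [setLIntegral_const, Real.volume_Icc, sub_zero]
  by_contra! hcon
  have hne : (Finset.univ : Finset (Fin n)).Nonempty := ⟨⟨0, hn⟩, Finset.mem_univ _⟩
  have hlt := ENNReal.sum_lt_sum_of_nonempty hne (fun i _ => hcon i)
  have hn' : (n : ℝ) ≠ 0 := by exact_mod_cast hn.ne'
  have heq : ∑ _i : Fin n, ENNReal.ofReal ((q : ℝ) / (n : ℝ) * T)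
      = (q : ENNReal) * ENNReal.ofReal T := by
    rw [Finset.sum_const, Finset.card_univ, Fintype.card_fin, nsmul_eq_mul,
      ← ENNReal.ofReal_natCast n, ← ENNReal.ofReal_natCast q,
      ← ENNReal.ofReal_mul (by positivity), ← ENNReal.ofReal_mul (by positivity)]
    congr 1
    field_simp
  rw [heq] at hlt
  exact absurd hsum (not_le.2 hlt)
end

section
/- Let n agents each have the same demand d with 0 < d ≤ S, let q = ⌊S/d⌋, assume q ≤ n, and let μ_1, …, μ_n be nonatomic finite Borel measures on [0,T] (agent i's additive utility). Then there exists a feasible allocation X_1, …, X_n of [0,T] such that μ_i(X_i) ≥ (q/n)·μ_i([0,T]) for every agent i; that is, with identical demands and additive utilities one can guarantee every agent a q/n fraction of his total utility. -/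
open MeasureTheory Set

/-- Moving knife on an interval `[a,B]`. -/
lemma knife_aux {ι : Type*} [DecidableEq ι] (F : ι → ℝ → ℝ) (c : ι → ℝ) (T B : ℝ) (hT : 0 < T)
    (hF : ∀ i, Continuous (F i)) (hm : ∀ i, Monotone (F i)) (hc : ∀ i, 0 ≤ c i)
    (hstep : ∀ i x, 0 ≤ x → x + T ≤ B → F i x + c i ≤ F i (x + T)) :
    ∀ (k : ℕ) (A : Finset ι) (a : ℝ), A.card = k → 0 ≤ a → a ≤ B →
      (∀ i ∈ A, (k : ℝ) * c i ≤ F i B - F i a) →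
      ∃ l r : ι → ℝ, (∀ i ∈ A, a ≤ l i ∧ l i ≤ r i ∧ r i ≤ B ∧ r i ≤ l i + T ∧
          F i (r i) = F i (l i) + c i) ∧
        ∀ i ∈ A, ∀ j ∈ A, i ≠ j → Disjoint (Ioc (l i) (r i)) (Ioc (l j) (r j)) := by
  intro k
  induction k with
  | zero =>
    intro A a hA _ _ _
    have : A = ∅ := Finset.card_eq_zero.mp hA
    subst this
    exact ⟨fun _ => 0, fun _ => 0, by simp, by simp⟩
  | succ k ih =>
    intro A a hA ha haB hval
    have hex : ∀ i ∈ A, ∃ b, a ≤ b ∧ b ≤ B ∧ b ≤ a + T ∧ F i b = F i a + c i := by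
      intro i hi
      have h1 : F i a + c i ≤ F i (min B (a + T)) := by
        rcases le_total B (a + T) with h | h
        · rw [min_eq_left h]
          have h2 := hval i hi
          have h3 : 0 ≤ (k : ℝ) * c i := mul_nonneg (Nat.cast_nonneg k) (hc i)
          push_cast at h2
          linarith
        · rw [min_eq_right h]
          exact hstep i a ha h
      have hle : a ≤ min B (a + T) := le_min haB (by linarith)
      obtain ⟨b, hb, hb2⟩ := intermediate_value_Icc hle (hF i).continuousOn
        (show F i a + c i ∈ Icc _ _ from ⟨by linarith [hc i], h1⟩)
      exact ⟨b, hb.1, hb.2.trans (min_le_left _ _), hb.2.trans (min_le_right _ _), hb2⟩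
    choose! b hb using hex
    have hne : A.Nonempty := Finset.card_pos.mp (by omega)
    obtain ⟨i₀, hi₀, hmin⟩ := Finset.exists_min_image A b hne
    obtain ⟨l, r, hlr, hdis⟩ := ih (A.erase i₀) (b i₀)
      (by rw [Finset.card_erase_of_mem hi₀]; omega) (ha.trans (hb i₀ hi₀).1) (hb i₀ hi₀).2.1 (by
        intro j hj
        have hjA := Finset.mem_of_mem_erase hj
        have h1 := hm j (hmin j hjA)
        have h2 := (hb j hjA).2.2.2
        have h3 := hval j hjA
        push_cast at h3
        linarith)
    have key : ∀ j ∈ A, j ≠ i₀ → Disjoint (Ioc a (b i₀)) (Ioc (l j) (r j)) := by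
      intro j hj hne
      rw [Set.disjoint_left]
      intro x hx hx2
      have := (hlr j (Finset.mem_erase.mpr ⟨hne, hj⟩)).1
      linarith [hx.2, hx2.1]
    refine ⟨Function.update l i₀ a, Function.update r i₀ (b i₀), ?_, ?_⟩
    · intro i hi
      by_cases h : i = i₀
      · subst h
        simpa using hb i hi
      · rw [Function.update_of_ne h, Function.update_of_ne h]
        have h1 := hlr i (Finset.mem_erase.mpr ⟨h, hi⟩)
        exact ⟨(hb i₀ hi₀).1.trans h1.1, h1.2⟩
    · intro i hi j hj hij
      by_cases h : i = i₀
      · subst h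
        rw [Function.update_self, Function.update_self, Function.update_of_ne hij.symm,
          Function.update_of_ne hij.symm]
        exact key j hj hij.symm
      · by_cases h' : j = i₀
        · subst h'
          rw [Function.update_self, Function.update_self, Function.update_of_ne h,
            Function.update_of_ne h]
          exact (key i hi h).symm
        · rw [Function.update_of_ne h, Function.update_of_ne h, Function.update_of_ne h',
            Function.update_of_ne h']
          exact hdis i (Finset.mem_erase.mpr ⟨h, hi⟩) j (Finset.mem_erase.mpr ⟨h', hj⟩) hij

lemma cont_aux (ν : Measure ℝ) [IsFiniteMeasure ν] [NullSingletonClass ν] :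
    Continuous (fun y => ν.real (Ioc 0 y)) := by
  have h1 : Continuous (fun y : ℝ => ∫ _ in (0:ℝ)..y, (1:ℝ) ∂ν) :=
    intervalIntegral.continuous_primitive (fun a b => by simp) 0
  have h2 : (fun y => ν.real (Ioc 0 y)) = fun y => ∫ _ in (0:ℝ)..(max y 0), (1:ℝ) ∂ν := by
    funext y
    rw [intervalIntegral.integral_of_le (le_max_right _ _)]
    rcases le_total y 0 with h | h
    · simp [h]
    · simp [h]
  rw [h2]
  exact h1.comp (by fun_prop)

/-- Disjointness of the translates of a short interval. -/
lemma piece_aux (ν : Measure ℝ) [IsFiniteMeasure ν] (hν : ν (Iic 0) = 0) (q : ℕ) (T l r : ℝ)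
    (hT : 0 < T) (hlr : l ≤ r) (hrl : r ≤ l + T) :
    ν.real (⋃ k ∈ Finset.range q, Ioc (l - k * T) (r - k * T)) =
      ∑ k ∈ Finset.range q, ν.real (Ioc 0 (r - k * T)) -
      ∑ k ∈ Finset.range q, ν.real (Ioc 0 (l - k * T)) := by
  rw [measureReal_biUnion_finset, ← Finset.sum_sub_distrib]
  · refine Finset.sum_congr rfl fun k _ => ?_
    have hI : ∀ y, ν.real (Ioc 0 y) = ν.real (Iic y) := by
      intro y
      have : Iic y \ Iic 0 = Ioc 0 y := by ext x; simp [and_comm]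
      rw [← this]
      simp only [measureReal_def]
      rw [measure_sdiff_null hν]
    have h3 : Iic (r - k * T) \ Iic (l - k * T) = Ioc (l - k * T) (r - k * T) := by
      ext x; simp [and_comm]
    rw [hI, hI, ← h3, measureReal_sdiff (Iic_subset_Iic.mpr (by linarith)) measurableSet_Iic]
  · have key : ∀ k k' : ℕ, k < k' →
        Disjoint (Ioc (l - k * T) (r - k * T)) (Ioc (l - k' * T) (r - k' * T)) := by
      intro k k' h
      rw [Set.disjoint_left]
      intro x hx hx'
      have h1 : (k : ℝ) + 1 ≤ k' := by exact_mod_cast h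
      have h2 := mul_le_mul_of_nonneg_right h1 hT.le
      linarith [hx.1, hx'.2]
    intro k _ k' _ hne
    rcases lt_or_gt_of_ne hne with h | h
    · exact key k k' h
    · exact (key k' k h).symm
  · intro k _
    exact measurableSet_Ioc

/-- Identical demands, additive utilities: with `n` agents each of demand `d` (`0 < d ≤ S`),
`q = ⌊S/d⌋ ≤ n`, and nonatomic finite Borel utility measures `μ i` on `[0,T]`, there is a
feasible allocation giving every agent at least a `q/n` fraction of his total utility. -/
theorem identical_demands_additive_utilities
    (n q : ℕ) (d S T : ℝ)
    (hd : 0 < d) (hdS : d ≤ S) (hT : 0 < T)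
    (hq : q = ⌊S / d⌋₊) (hqn : q ≤ n)
    (μ : Fin n → Measure ℝ)
    (hfin : ∀ i, IsFiniteMeasure (μ i))
    (hatom : ∀ i, NoAtoms (μ i)) :
    ∃ X : Fin n → Set ℝ,
      (∀ i, MeasurableSet (X i)) ∧
      (∀ i, X i ⊆ Set.Icc 0 T) ∧
      (∀ t ∈ Set.Icc (0 : ℝ) T, ∑ i, (X i).indicator (fun _ => d) t ≤ S) ∧
      (∀ i, ENNReal.ofReal ((q : ℝ) / (n : ℝ)) * μ i (Set.Icc 0 T) ≤ μ i (X i)) := by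
  have hatom2 : ∀ i, NullSingletonClass (μ i) := hatom
  have hqS : (q : ℝ) * d ≤ S := by
    have h1 : (q : ℝ) ≤ S / d := by
      rw [hq]; exact Nat.floor_le (div_nonneg (hd.le.trans hdS) hd.le)
    rwa [le_div_iff₀ hd] at h1
  have hq1 : 1 ≤ q := by
    rw [hq]; apply Nat.le_floor
    rw [Nat.cast_one, le_div_iff₀ hd]; linarith
  clear hq
  have hn : (0 : ℝ) < n := by exact_mod_cast (by omega : 0 < n)
  have hqn' : (q : ℝ) / n ≤ 1 := by
    rw [div_le_one hn]; exact_mod_cast hqn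
  set ν : Fin n → Measure ℝ := fun i => (μ i).restrict (Ioc 0 T) with hνdef
  have hν0 : ∀ i, ν i (Iic 0) = 0 := by
    intro i
    simp only [hνdef]
    rw [Measure.restrict_apply measurableSet_Iic]
    have : Iic (0:ℝ) ∩ Ioc 0 T = ∅ := by
      ext x; simp; intro h1 h2; linarith
    rw [this, measure_empty]
  set M : Fin n → ℝ := fun i => (μ i).real (Ioc 0 T) with hM
  have hM0 : ∀ i, 0 ≤ M i := fun i => measureReal_nonneg
  have hGM : ∀ i y, T ≤ y → (ν i).real (Ioc 0 y) = M i := by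
    intro i y hy
    simp only [hνdef, hM]
    rw [measureReal_restrict_apply measurableSet_Ioc,
      Set.inter_eq_right.mpr (Ioc_subset_Ioc_right hy)]
  have hG0 : ∀ i y, y ≤ 0 → (ν i).real (Ioc 0 y) = 0 := by
    intro i y hy
    rw [Ioc_eq_empty (by linarith), measureReal_empty]
  set F : Fin n → ℝ → ℝ := fun i x => ∑ k ∈ Finset.range q, (ν i).real (Ioc 0 (x - k * T))
    with hFdef
  have hFc : ∀ i, Continuous (F i) := by
    intro i
    simp only [hFdef]
    refine continuous_finsetSum _ fun k _ => ?_
    exact (cont_aux (ν i)).comp (by fun_prop : Continuous fun x : ℝ => x - k * T)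
  have hFm : ∀ i, Monotone (F i) := by
    intro i x y hxy
    simp only [hFdef]
    refine Finset.sum_le_sum fun k _ => ?_
    exact measureReal_mono (Ioc_subset_Ioc_right (by linarith))
  have hF0 : ∀ i, F i 0 = 0 := by
    intro i
    simp only [hFdef]
    refine Finset.sum_eq_zero fun k _ => hG0 i _ ?_
    have : 0 ≤ (k : ℝ) * T := by positivity
    linarith
  have hFB : ∀ i, F i (q * T) = q * M i := by
    intro i
    simp only [hFdef]
    rw [Finset.sum_congr rfl (g := fun _ => M i)]
    · simp
    · intro k hk
      apply hGM
      have h1 : (k : ℝ) + 1 ≤ q := by exact_mod_cast Finset.mem_range.mp hk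
      have h2 := mul_le_mul_of_nonneg_right h1 hT.le
      linarith
  have hstep : ∀ i x, 0 ≤ x → x + T ≤ q * T → F i x + (q / n : ℝ) * M i ≤ F i (x + T) := by
    intro i x hx hxB
    have hcM : (q / n : ℝ) * M i ≤ M i := mul_le_of_le_one_left (hM0 i) hqn'
    suffices F i (x + T) = F i x + M i by linarith
    obtain ⟨p, rfl⟩ : ∃ p, q = p + 1 := ⟨q - 1, by omega⟩
    simp only [hFdef]
    rw [Finset.sum_range_succ', Finset.sum_range_succ, hGM i (x + T - _) (by simp [hx]),
      hG0 i (x - p * T) (by push_cast at hxB; linarith), add_zero]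
    congr 1
    refine Finset.sum_congr rfl fun k _ => ?_
    congr 2
    push_cast
    ring
  obtain ⟨l, r, hlr, hdis⟩ := knife_aux F (fun i => (q / n : ℝ) * M i) T (q * T) hT hFc hFm
    (fun i => mul_nonneg (by positivity) (hM0 i)) hstep n Finset.univ 0 (by simp) le_rfl
    (by positivity) (by
      intro i _
      rw [hFB, hF0]
      apply le_of_eq
      field_simp
      ring)
  have hUm : ∀ i, MeasurableSet (⋃ k ∈ Finset.range q, Ioc (l i - k * T) (r i - k * T)) :=
    fun i => Finset.measurableSet_biUnion _ fun k _ => measurableSet_Ioc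
  refine ⟨fun i => (⋃ k ∈ Finset.range q, Ioc (l i - k * T) (r i - k * T)) ∩ Ioc 0 T,
    fun i => (hUm i).inter measurableSet_Ioc,
    fun i => inter_subset_right.trans Ioc_subset_Icc_self, ?_, ?_⟩
  · intro t _
    classical
    simp only [Set.indicator_apply]
    rw [← Finset.sum_filter, Finset.sum_const, nsmul_eq_mul]
    refine le_trans (mul_le_mul_of_nonneg_right ?_ hd.le) hqS
    rw [Nat.cast_le]
    set A := Finset.univ.filter fun i =>
      t ∈ (⋃ k ∈ Finset.range q, Ioc (l i - k * T) (r i - k * T)) ∩ Ioc 0 T with hA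
    have hex : ∀ i ∈ A, ∃ k : ℕ, k < q ∧ t + k * T ∈ Ioc (l i) (r i) := by
      intro i hi
      have h1 := (Finset.mem_filter.mp hi).2.1
      simp only [mem_iUnion, Finset.mem_range] at h1
      obtain ⟨k, hk, h2⟩ := h1
      exact ⟨k, hk, by linarith [h2.1], by linarith [h2.2]⟩
    choose! f hf using hex
    have := Finset.card_le_card_of_injOn (s := A) (t := Finset.range q) f
      (fun i hi => by simpa using (hf i hi).1) (by
        intro i hi j hj hij
        by_contra hne
        have h1 := (hf i hi).2
        have h2 := (hf j hj).2
        rw [← hij] at h2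
        exact Set.disjoint_left.mp
          (hdis i (Finset.mem_univ _) j (Finset.mem_univ _) hne) h1 h2)
    simpa using this
  · intro i
    obtain ⟨h0, h1, h2, h3, h4⟩ := hlr i (Finset.mem_univ _)
    have h5 := piece_aux (ν i) (hν0 i) q T (l i) (r i) hT h1 h3
    have h6 : (ν i).real (⋃ k ∈ Finset.range q, Ioc (l i - k * T) (r i - k * T))
        = (q / n : ℝ) * M i := by
      rw [h5]
      simp only [hFdef] at h4
      linarith
    simp only [hνdef] at h6
    rw [measureReal_restrict_apply (hUm i)] at h6
    rw [measure_congr (Ioc_ae_eq_Icc (μ := μ i) (a := (0:ℝ)) (b := T)).symm,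
      ← ofReal_measureReal (μ := μ i) (s := Ioc 0 T), ← ENNReal.ofReal_mul (by positivity),
      ← ofReal_measureReal (μ := μ i), h6]
end

section
/- Let n agents have demands d_1, …, d_n > 0 and supply S > 0, and suppose the agents can be packed into k bins: there is a partition of {1,…,n} into sets B_1, …, B_k such that for each j, the sum of d_i over i ∈ B_j is at most S. Then there exists a feasible allocation X_1, …, X_n of [0,T] with λ(X_i) = T/k for every agent i; that is, a bin-packing solution with k bins yields an allocation connecting every agent a 1/k fraction of the time. -/
open MeasureTheory Set

/-- A bin-packing solution with `k` bins of capacity `S` yields a feasible allocation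
connecting every agent exactly a `1/k` fraction of the time. -/
theorem bin_packing_allocation
    (n k : ℕ) (d : Fin n → ℝ) (S T : ℝ)
    (hd : ∀ i, 0 < d i) (hS : 0 < S) (hT : 0 < T)
    (B : Fin k → Finset (Fin n))
    (hpart : ∀ i, ∃! j, i ∈ B j)
    (hcap : ∀ j, ∑ i ∈ B j, d i ≤ S) :
    ∃ X : Fin n → Set ℝ,
      (∀ i, MeasurableSet (X i)) ∧
      (∀ i, X i ⊆ Set.Icc 0 T) ∧
      (∀ t ∈ Set.Icc (0 : ℝ) T, ∑ i, (X i).indicator (fun _ => d i) t ≤ S) ∧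
      (∀ i, volume (X i) = ENNReal.ofReal (T / (k : ℝ))) := by
  choose f hf _ using hpart
  refine ⟨fun i => Set.Ico (((f i : ℕ) : ℝ) * (T / k)) ((((f i : ℕ) : ℝ) + 1) * (T / k)),
    fun i => measurableSet_Ico, ?_, ?_, ?_⟩
  · intro i t ht
    have hk : (0 : ℝ) < k := by exact_mod_cast (Nat.zero_le _).trans_lt (f i).isLt
    have hc : 0 < T / k := div_pos hT hk
    have h1 : ((f i : ℕ) : ℝ) + 1 ≤ k := by exact_mod_cast (f i).isLt
    have h2 : (((f i : ℕ) : ℝ) + 1) * (T / k) ≤ k * (T / k) :=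
      mul_le_mul_of_nonneg_right h1 hc.le
    have h3 : (k : ℝ) * (T / k) = T := by field_simp
    have h4 : 0 ≤ ((f i : ℕ) : ℝ) * (T / k) := by positivity
    exact ⟨h4.trans ht.1, by linarith [ht.2]⟩
  · intro t _
    by_cases h : ∃ i, t ∈ Set.Ico (((f i : ℕ) : ℝ) * (T / k)) ((((f i : ℕ) : ℝ) + 1) * (T / k))
    · obtain ⟨j, hj⟩ := h
      have hk : (0 : ℝ) < k := by exact_mod_cast (Nat.zero_le _).trans_lt (f j).isLt
      have hc : 0 < T / k := div_pos hT hk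
      refine le_trans ?_ (hcap (f j))
      have hB : ∑ i ∈ B (f j), d i = ∑ i, if i ∈ B (f j) then d i else 0 := by simp
      rw [hB]
      refine Finset.sum_le_sum fun i _ => ?_
      by_cases hi : t ∈ Set.Ico (((f i : ℕ) : ℝ) * (T / k)) ((((f i : ℕ) : ℝ) + 1) * (T / k))
      · have h1 : ((f i : ℕ) : ℝ) < (f j : ℕ) + 1 :=
          lt_of_mul_lt_mul_right (hi.1.trans_lt hj.2) hc.le
        have h2 : ((f j : ℕ) : ℝ) < (f i : ℕ) + 1 :=
          lt_of_mul_lt_mul_right (hj.1.trans_lt hi.2) hc.le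
        have h1' : (f i : ℕ) < (f j : ℕ) + 1 := by exact_mod_cast h1
        have h2' : (f j : ℕ) < (f i : ℕ) + 1 := by exact_mod_cast h2
        have he : f i = f j := Fin.ext (by omega)
        rw [Set.indicator_of_mem hi, if_pos (he ▸ hf i)]
      · rw [Set.indicator_of_notMem hi]
        split_ifs
        · exact (hd i).le
        · exact le_rfl
    · push Not at h
      rw [Finset.sum_eq_zero fun i _ => Set.indicator_of_notMem (h i) _]
      exact hS.le
  · intro i
    rw [Real.volume_Ico]
    congr 1
    ring
end

section
/- Let n agents have demands d_1, …, d_n > 0 and supply S > 0, and suppose there is a q-times bin packing with k bins: subsets B_1, …, B_k of {1,…,n} such that for each j the sum of d_i over i ∈ B_j is at most S, and every agent i belongs to at least q of the sets B_1, …, B_k. Then there exists a feasible allocation X_1, …, X_n of [0,T] with λ(X_i) ≥ (q/k)·T for every agent i. -/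
open MeasureTheory Set

/-- A `q`-times bin packing with `k` bins of capacity `S` (each agent in at least `q` bins)
yields a feasible allocation connecting every agent at least a `q/k` fraction of the time. -/
theorem q_times_bin_packing_allocation
    (n k q : ℕ) (d : Fin n → ℝ) (S T : ℝ)
    (hd : ∀ i, 0 < d i) (hS : 0 < S) (hT : 0 < T)
    (B : Fin k → Finset (Fin n))
    (hcap : ∀ j, ∑ i ∈ B j, d i ≤ S)
    (hcov : ∀ i, q ≤ (Finset.univ.filter fun j => i ∈ B j).card) :
    ∃ X : Fin n → Set ℝ,
      (∀ i, MeasurableSet (X i)) ∧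
      (∀ i, X i ⊆ Set.Icc 0 T) ∧
      (∀ t ∈ Set.Icc (0 : ℝ) T, ∑ i, (X i).indicator (fun _ => d i) t ≤ S) ∧
      (∀ i, ENNReal.ofReal ((q : ℝ) / (k : ℝ) * T) ≤ volume (X i)) := by
  classical
  set c : ℝ := T / k with hc
  have hc0 : 0 ≤ c := by positivity
  let I : Fin k → Set ℝ := fun j => Set.Ico ((j : ℝ) * c) (((j : ℝ) + 1) * c)
  have huniq : ∀ (j j' : Fin k) (t : ℝ), t ∈ I j → t ∈ I j' → j ≤ j' := by
    intro j j' t h h'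
    by_contra hlt
    have h1 : (j' : ℕ) + 1 ≤ (j : ℕ) := by
      have := not_le.mp hlt
      exact this
    have h2 : ((j' : ℕ) : ℝ) + 1 ≤ ((j : ℕ) : ℝ) := by exact_mod_cast h1
    have h3 := mul_le_mul_of_nonneg_right h2 hc0
    have h4 := h.1
    have h5 := h'.2
    linarith
  have huniq' : ∀ (j j' : Fin k) (t : ℝ), t ∈ I j → t ∈ I j' → j = j' :=
    fun j j' t h h' => le_antisymm (huniq j j' t h h') (huniq j' j t h' h)
  refine ⟨fun i => ⋃ j ∈ Finset.univ.filter (fun j => i ∈ B j), I j, ?_, ?_, ?_, ?_⟩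
  · intro i
    exact Finset.measurableSet_biUnion _ (fun j _ => measurableSet_Ico)
  · intro i t ht
    simp only [Set.mem_iUnion] at ht
    obtain ⟨j, -, hj⟩ := ht
    have hk : (0 : ℝ) < k := by
      have : 0 < k := lt_of_le_of_lt (Nat.zero_le _) j.isLt
      exact_mod_cast this
    have hkc : (k : ℝ) * c = T := by rw [hc]; field_simp
    have h2 : ((j : ℕ) : ℝ) + 1 ≤ k := by exact_mod_cast j.isLt
    have h3 := mul_le_mul_of_nonneg_right h2 hc0
    have h4 : 0 ≤ ((j : ℕ) : ℝ) * c := by positivity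
    exact ⟨h4.trans hj.1, by have := hj.2; linarith⟩
  · intro t _
    by_cases h : ∃ j, t ∈ I j
    · obtain ⟨j, hj⟩ := h
      refine le_trans (le_of_eq ?_) (hcap j)
      rw [← Finset.sum_filter_add_sum_filter_not Finset.univ (fun i => i ∈ B j)]
      rw [Finset.sum_eq_zero (s := Finset.univ.filter (fun i => ¬ i ∈ B j)), add_zero,
        Finset.filter_univ_mem]
      · refine Finset.sum_congr rfl fun i hi => ?_
        apply Set.indicator_of_mem
        simp only [Set.mem_iUnion]
        exact ⟨j, by simpa using hi, hj⟩
      · intro i hi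
        apply Set.indicator_of_notMem
        simp only [Set.mem_iUnion]
        rintro ⟨j', hj', ht'⟩
        have := huniq' j j' t hj ht'
        subst this
        simp at hi hj'
        exact hi hj'
    · refine le_trans (le_of_eq ?_) hS.le
      refine Finset.sum_eq_zero fun i _ => ?_
      apply Set.indicator_of_notMem
      simp only [Set.mem_iUnion]
      rintro ⟨j', _, ht'⟩
      exact h ⟨j', ht'⟩
  · intro i
    rw [measure_biUnion_finset]
    · have hv : ∀ j : Fin k, volume (I j) = ENNReal.ofReal c := by
        intro j
        simp only [I, Real.volume_Ico]
        congr 1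
        ring
      simp only [hv, Finset.sum_const, nsmul_eq_mul]
      have h1 : (q : ℝ) / k * T = q * c := by rw [hc]; ring
      rw [h1, ENNReal.ofReal_mul (by positivity), ENNReal.ofReal_natCast]
      gcongr
      exact hcov i
    · intro j _ j' _ hne
      exact Set.disjoint_left.mpr fun t h h' => hne (huniq' j j' t h h')
    · exact fun j _ => measurableSet_Ico
end

section
/- Let n agents have demands d_1, …, d_n > 0 and supply S > 0, and suppose there are subsets B_1, …, B_k of {1,…,n} with weights λ_1, …, λ_k ≥ 0 summing to 1 such that for each j the sum of d_i over i ∈ B_j is at most S, and for each agent i the total weight of the sets B_j containing i is at least r. Then for any nonatomic finite Borel measures u_1, …, u_n on [0,T], there exists a feasible allocation X_1, …, X_n of [0,T] such that u_i(X_i) ≥ r·u_i([0,T]) for every agent i. That is, the egalitarian guarantee r achievable for uniform utilities can also be guaranteed for arbitrary additive utilities. -/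
open MeasureTheory Set

/-- Every measurable subset of `[0,T]` can be halved simultaneously for all measures in `L`. -/
def Halvable (T : ℝ) (L : Set (Measure ℝ)) : Prop :=
  ∀ A : Set ℝ, MeasurableSet A → A ⊆ Set.Icc 0 T →
    ∃ B, B ⊆ A ∧ MeasurableSet B ∧ ∀ v ∈ L, v.real B = v.real A / 2

/-- Dyadic increasing chain of sets generated by a halving operation. -/
def dyadicChain (h : Set ℝ → Set ℝ) (A : Set ℝ) : ℕ → ℕ → Set ℝ
  | 0, j => if j = 0 then ∅ else A
  | m + 1, j => if j % 2 = 0 then dyadicChain h A m (j / 2)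
      else dyadicChain h A m (j / 2) ∪
        h (dyadicChain h A m (j / 2 + 1) \ dyadicChain h A m (j / 2))

lemma halvable_filtration {T : ℝ} {L : Set (Measure ℝ)} (hL : Halvable T L)
    (hf : ∀ v ∈ L, IsFiniteMeasure v) (A : Set ℝ) (hA : MeasurableSet A) (hAT : A ⊆ Set.Icc 0 T) :
    ∃ G : ℝ → Set ℝ, Monotone G ∧ (∀ t, MeasurableSet (G t)) ∧ (∀ t, G t ⊆ A) ∧
      ∀ v ∈ L, ∀ t ∈ Set.Icc (0 : ℝ) 1, v.real (G t) = t * v.real A := by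
  have h1 : ∀ A : Set ℝ, ∃ B, MeasurableSet A → A ⊆ Set.Icc 0 T →
      (B ⊆ A ∧ MeasurableSet B ∧ ∀ v ∈ L, v.real B = v.real A / 2) := by
    intro A
    by_cases h : MeasurableSet A ∧ A ⊆ Set.Icc 0 T
    · obtain ⟨B, hB⟩ := hL A h.1 h.2
      exact ⟨B, fun _ _ => hB⟩
    · exact ⟨∅, fun h2 h3 => absurd ⟨h2, h3⟩ h⟩
  choose h hh using h1
  set F := dyadicChain h A with hF
  have F0 : ∀ m j, F (m + 1) (2 * j) = F m j := by
    intro m j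
    simp [hF, dyadicChain]
  have F1 : ∀ m j, F (m + 1) (2 * j + 1) = F m j ∪ h (F m (j + 1) \ F m j) := by
    intro m j
    have : (2 * j + 1) / 2 = j := by omega
    have h2 : (2 * j + 1) % 2 = 1 := by omega
    simp [hF, dyadicChain, this]
  have inv : ∀ m, (∀ j, MeasurableSet (F m j) ∧ F m j ⊆ A ∧ F m j ⊆ F m (j + 1)) := by
    intro m
    induction m with
    | zero =>
      intro j
      by_cases hj : j = 0 <;> simp [hF, dyadicChain, hj, hA]
    | succ m ih =>
      intro j
      obtain ⟨i, rfl | rfl⟩ := Nat.even_or_odd' j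
      · rw [F0, F1]
        exact ⟨(ih i).1, (ih i).2.1, subset_union_left⟩
      · have e : 2 * i + 1 + 1 = 2 * (i + 1) := by ring
        rw [e, F0, F1]
        have hm := ((ih (i + 1)).1.diff (ih i).1)
        have hs : F m (i + 1) \ F m i ⊆ F m (i + 1) := sdiff_subset
        obtain ⟨a, b, c⟩ := hh _ hm (hs.trans ((ih (i + 1)).2.1.trans hAT))
        exact ⟨(ih i).1.union b, union_subset (ih i).2.1 (a.trans (hs.trans (ih (i + 1)).2.1)),
          union_subset (ih i).2.2 (a.trans hs)⟩
  have meas : ∀ v ∈ L, ∀ m j, j ≤ 2 ^ m → v.real (F m j) = j / 2 ^ m * v.real A := by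
    intro v hv m
    have := hf v hv
    induction m with
    | zero =>
      intro j hj
      have : j = 0 ∨ j = 1 := by simp at hj; omega
      rcases this with rfl | rfl <;> simp [hF, dyadicChain]
    | succ m ih =>
      intro j hj
      rw [pow_succ] at hj
      obtain ⟨i, rfl | rfl⟩ := Nat.even_or_odd' j
      · rw [F0, ih i (by omega)]
        push_cast
        field_simp
        try ring
      · rw [F1]
        have hm := ((inv m (i + 1)).1.diff (inv m i).1)
        have hs : F m (i + 1) \ F m i ⊆ F m (i + 1) := sdiff_subset
        obtain ⟨a, b, c⟩ := hh _ hm (hs.trans ((inv m (i + 1)).2.1.trans hAT))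
        rw [measureReal_union (disjoint_sdiff_right.mono_right a) b, c v hv,
          measureReal_sdiff (inv m i).2.2 (inv m i).1, ih i (by omega), ih (i + 1) (by omega)]
        push_cast
        field_simp
        ring
  have mono : ∀ m, Monotone (F m) := fun m => monotone_nat_of_le_succ fun j => (inv m j).2.2
  have step : ∀ t : ℝ, Monotone fun m : ℕ => F m ⌊t * 2 ^ m⌋₊ := by
    intro t
    refine monotone_nat_of_le_succ fun m => ?_
    rw [← F0]
    refine mono _ ?_
    by_cases ht : 0 ≤ t
    · refine Nat.le_floor ?_
      push_cast
      have := Nat.floor_le (a := t * 2 ^ m) (by positivity)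
      rw [pow_succ]
      linarith
    · have : t * 2 ^ m ≤ 0 := mul_nonpos_of_nonpos_of_nonneg (by linarith) (by positivity)
      simp [Nat.floor_of_nonpos this]
  refine ⟨fun t => ⋃ m : ℕ, F m ⌊t * 2 ^ m⌋₊, ?_, ?_, ?_, ?_⟩
  · intro s t hst
    refine iUnion_mono fun m => mono m (Nat.floor_mono ?_)
    gcongr
  · exact fun t => MeasurableSet.iUnion fun m => (inv m _).1
  · exact fun t => iUnion_subset fun m => (inv m _).2.1
  · intro v hv t ht
    have := hf v hv
    have l1 := tendsto_measure_iUnion_atTop (μ := v) (step t)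
    have l2 := (ENNReal.tendsto_toReal (measure_ne_top v _)).comp l1
    refine tendsto_nhds_unique l2 ?_
    have l3 := ((tendsto_nat_floor_mul_div_atTop (R := ℝ) ht.1).comp
      (tendsto_pow_atTop_atTop_of_one_lt (one_lt_two : (1 : ℝ) < 2))).mul_const (v.real A)
    refine l3.congr fun m => ?_
    refine (meas v hv m _ ?_).symm
    refine Nat.floor_le_of_le ?_
    push_cast
    exact mul_le_of_le_one_left (by positivity) ht.2

lemma halvable_single (T : ℝ) (hT : 0 < T) (μ : Measure ℝ) [IsFiniteMeasure μ]
    [NullSingletonClass μ] : Halvable T {μ} := by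
  intro A hA hAT
  have hc := (integrable_const (μ := μ.restrict A) (1 : ℝ)).integrableOn (s := Iic T)
    |>.continuousOn_Iic_primitive_Iic
  have hc2 : ContinuousOn (fun b => μ.real (A ∩ Iic b)) (Icc (-1) T) := by
    refine (hc.mono Icc_subset_Iic_self).congr fun b _ => ?_
    simp [measureReal_def, Measure.restrict_apply, inter_comm]
  have hiv := intermediate_value_Icc (by linarith) hc2
  have e1 : A ∩ Iic (-1) = ∅ := by
    ext x
    simp only [mem_inter_iff, mem_Iic, mem_empty_iff_false, iff_false, not_and, not_le]
    intro hx
    linarith [(hAT hx).1]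
  have e2 : A ∩ Iic T = A := inter_eq_left.2 fun x hx => (hAT hx).2
  simp only [e1, e2] at hiv
  have hn : 0 ≤ μ.real A := measureReal_nonneg
  obtain ⟨b, -, hb⟩ := hiv (show μ.real A / 2 ∈ _ by constructor <;> simp <;> linarith)
  refine ⟨A ∩ Iic b, inter_subset_left, hA.inter measurableSet_Iic, ?_⟩
  rintro v rfl
  exact hb

lemma halvable_insert (T : ℝ) (μ : Measure ℝ) [IsFiniteMeasure μ] (L : Set (Measure ℝ))
    (hL : Halvable T L) (hf : ∀ v ∈ L, IsFiniteMeasure v) (hμ : μ ∈ L) (w : Measure ℝ)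
    (hw : w ≤ μ) : Halvable T (insert w L) := by
  intro A hA hAT
  have : IsFiniteMeasure w := isFiniteMeasure_of_le μ hw
  obtain ⟨G, Gm, Gmeas, GA, Gv⟩ := halvable_filtration hL hf A hA hAT
  have lip : ∀ s ∈ Icc (0 : ℝ) 1, ∀ t ∈ Icc (0 : ℝ) 1, s ≤ t →
      |w.real (G t) - w.real (G s)| ≤ μ.real A * |t - s| := by
    intro s hs t ht hst
    rw [← measureReal_sdiff (Gm hst) (Gmeas s), abs_of_nonneg measureReal_nonneg,
      abs_of_nonneg (by linarith)]
    calc w.real (G t \ G s) ≤ μ.real (G t \ G s) :=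
          ENNReal.toReal_mono (measure_ne_top _ _) (hw _)
      _ = _ := by
        rw [measureReal_sdiff (Gm hst) (Gmeas s), Gv μ hμ t ht, Gv μ hμ s hs]; ring
  have cont : ContinuousOn (fun t => w.real (G t)) (Icc 0 1) := by
    refine LipschitzOnWith.continuousOn (K := ⟨μ.real A, measureReal_nonneg⟩) ?_
    refine LipschitzOnWith.of_dist_le_mul fun s hs t ht => ?_
    simp only [Real.dist_eq]
    rcases le_total s t with h | h
    · rw [abs_sub_comm, abs_sub_comm s]; exact lip s hs t ht h
    · exact lip t ht s hs h
  have hc : ContinuousOn (fun s : ℝ => w.real (G (s + 1/2)) - w.real (G s)) (Icc 0 (1/2)) := by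
    refine ContinuousOn.sub (cont.comp (by fun_prop) ?_) (cont.mono ?_)
    · intro s hs; constructor <;> linarith [hs.1, hs.2]
    · intro s hs; constructor <;> linarith [hs.1, hs.2]
  -- endpoint values
  have w0 : w.real (G 0) = 0 := by
    have h1 : μ.real (G 0) = 0 := by rw [Gv μ hμ 0 (by simp)]; simp
    refine le_antisymm (le_trans ?_ h1.le) measureReal_nonneg
    exact ENNReal.toReal_mono (measure_ne_top _ _) (hw _)
  have w1 : w.real (G 1) = w.real A := by
    have h1 : μ.real (A \ G 1) = 0 := by
      rw [measureReal_sdiff (GA 1) (Gmeas 1), Gv μ hμ 1 (by simp)]; simp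
    have h2 : w.real (A \ G 1) = 0 := by
      refine le_antisymm ?_ measureReal_nonneg
      rw [← h1]
      exact ENNReal.toReal_mono (measure_ne_top _ _) (hw _)
    rw [measureReal_sdiff (GA 1) (Gmeas 1)] at h2
    linarith
  have key : ∃ s ∈ Icc (0 : ℝ) (1/2), w.real (G (s + 1/2)) - w.real (G s) = w.real A / 2 := by
    have hz : (0 : ℝ) + 1/2 = 1/2 := by norm_num
    have ho : (1/2 : ℝ) + 1/2 = 1 := by norm_num
    have hle : (0 : ℝ) ≤ 1/2 := by norm_num
    rcases le_total (w.real (G (1/2))) (w.real A / 2) with h | h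
    · have := intermediate_value_Icc hle hc
      simp only [hz, ho, w0, w1] at this
      exact this ⟨by linarith, by linarith⟩
    · have := intermediate_value_Icc' hle hc
      simp only [hz, ho, w0, w1] at this
      exact this ⟨by linarith, by linarith⟩
  obtain ⟨s, hs, hsw⟩ := key
  have hss : G s ⊆ G (s + 1/2) := Gm (by linarith)
  refine ⟨G (s + 1/2) \ G s, sdiff_subset.trans (GA _), (Gmeas _).diff (Gmeas _), ?_⟩
  rintro v (rfl | hv)
  · rw [measureReal_sdiff hss (Gmeas s), hsw]
  · have := hf v hv
    rw [measureReal_sdiff hss (Gmeas s), Gv v hv _ ⟨by linarith [hs.1], by linarith [hs.2]⟩,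
      Gv v hv _ ⟨by linarith [hs.1], by linarith [hs.2]⟩]
    ring

lemma halvable_finset (T : ℝ) (hT : 0 < T) (μ : Measure ℝ) [IsFiniteMeasure μ]
    [NullSingletonClass μ] {n : ℕ} (u : Fin n → Measure ℝ) (hu : ∀ i, u i ≤ μ)
    (s : Finset (Fin n)) : Halvable T (insert μ (Set.image u s)) := by
  induction s using Finset.induction_on with
  | empty => simpa using halvable_single T hT μ
  | insert i s hi ih =>
    rw [Finset.coe_insert, image_insert_eq, insert_comm]
    refine halvable_insert T μ _ ih ?_ (mem_insert _ _) _ (hu i)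
    rintro v (rfl | ⟨j, -, rfl⟩)
    · infer_instance
    · exact isFiniteMeasure_of_le μ (hu j)

/-- If a fractional combination of feasible bins (weights `λ j ≥ 0` summing to 1, each bin
within capacity `S`) gives every agent total weight at least `r`, then for arbitrary
nonatomic finite Borel utility measures `u i` on `[0,T]` there is a feasible allocation
guaranteeing every agent at least an `r` fraction of his total utility. -/
theorem uniform_guarantee_extends_to_additive_utilities
    (n k : ℕ) (d : Fin n → ℝ) (S T r : ℝ)
    (hd : ∀ i, 0 < d i) (hS : 0 < S) (hT : 0 < T)
    (B : Fin k → Finset (Fin n)) (lam : Fin k → ℝ)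
    (hlam0 : ∀ j, 0 ≤ lam j) (hlam1 : ∑ j, lam j = 1)
    (hcap : ∀ j, ∑ i ∈ B j, d i ≤ S)
    (hcov : ∀ i, r ≤ ∑ j ∈ Finset.univ.filter (fun j => i ∈ B j), lam j)
    (u : Fin n → Measure ℝ)
    (hfin : ∀ i, IsFiniteMeasure (u i))
    (hatom : ∀ i, NoAtoms (u i)) :
    ∃ X : Fin n → Set ℝ,
      (∀ i, MeasurableSet (X i)) ∧
      (∀ i, X i ⊆ Set.Icc 0 T) ∧
      (∀ t ∈ Set.Icc (0 : ℝ) T, ∑ i, (X i).indicator (fun _ => d i) t ≤ S) ∧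
      (∀ i, ENNReal.ofReal r * u i (Set.Icc 0 T) ≤ u i (X i)) := by
  have hsum : ∀ i, u i ≤ Measure.sum u := fun i => Measure.le_sum u i
  have hμf : IsFiniteMeasure (Measure.sum u) := by infer_instance
  have hμa : NullSingletonClass (Measure.sum u) := by
    constructor
    intro x
    rw [Measure.sum_apply_of_countable]
    simp [fun i => (hatom i).measure_singleton x]
  have hH := halvable_finset T hT (Measure.sum u) u hsum Finset.univ
  obtain ⟨G, Gm, Gmeas, GA, Gv⟩ := halvable_filtration hH (by
    rintro v (rfl | ⟨j, -, rfl⟩)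
    · exact hμf
    · exact hfin j) (Icc 0 T) measurableSet_Icc subset_rfl
  -- cut points
  let c : Fin k → ℝ := fun j => ∑ i ∈ Finset.univ.filter (fun i => i < j), lam i
  let c' : Fin k → ℝ := fun j => ∑ i ∈ Finset.univ.filter (fun i => i ≤ j), lam i
  have hc' : ∀ j, c' j = c j + lam j := by
    intro j
    have : Finset.univ.filter (fun i => i ≤ j) =
        insert j (Finset.univ.filter (fun i => i < j)) := by
      ext i; simp [le_iff_eq_or_lt]
    simp only [c, c', this]
    rw [Finset.sum_insert (by simp), add_comm]
  have hc0 : ∀ j, 0 ≤ c j := fun j => Finset.sum_nonneg fun i _ => hlam0 i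
  have hc1 : ∀ j, c' j ≤ 1 := fun j => by
    rw [← hlam1]
    exact Finset.sum_le_sum_of_subset_of_nonneg (Finset.subset_univ _) fun i _ _ => hlam0 i
  have hcc : ∀ i j, i < j → c' i ≤ c j := fun i j hij => by
    refine Finset.sum_le_sum_of_subset_of_nonneg ?_ fun i _ _ => hlam0 i
    intro a ha
    simp only [Finset.mem_filter, Finset.mem_univ, true_and] at ha ⊢
    exact lt_of_le_of_lt ha hij
  let P : Fin k → Set ℝ := fun j => G (c' j) \ G (c j)
  have Pmeas : ∀ j, MeasurableSet (P j) := fun j => (Gmeas _).diff (Gmeas _)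
  have PA : ∀ j, P j ⊆ Icc 0 T := fun j => sdiff_subset.trans (GA _)
  have Plt : ∀ i j, i < j → ∀ x, x ∈ P i → x ∉ P j := fun i j hij x hi hj =>
    hj.2 (Gm (hcc i j hij) hi.1)
  have Pun : ∀ i j x, x ∈ P i → x ∈ P j → i = j := by
    intro i j x hi hj
    rcases lt_trichotomy i j with h | h | h
    · exact absurd hj (Plt i j h x hi)
    · exact h
    · exact absurd hi (Plt j i h x hj)
  have Pv : ∀ i j, (u i).real (P j) = lam j * (u i).real (Icc 0 T) := by
    intro i j
    have := hfin i
    have hm : u i ∈ insert (Measure.sum u) (Set.image u (Finset.univ : Finset (Fin n))) :=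
      mem_insert_of_mem _ ⟨i, by simp, rfl⟩
    have h1 := hc' j
    have h2 := hlam0 j
    have h3 := hc0 j
    have h4 := hc1 j
    simp only [P]
    rw [measureReal_sdiff (Gm (by linarith)) (Gmeas _), Gv _ hm _ ⟨by linarith, by linarith⟩,
      Gv _ hm _ ⟨by linarith, by linarith⟩, h1]
    ring
  refine ⟨fun i => ⋃ j ∈ Finset.univ.filter (fun j => i ∈ B j), P j, ?_, ?_, ?_, ?_⟩
  · exact fun i => Finset.measurableSet_biUnion _ fun j _ => Pmeas j
  · exact fun i => iUnion₂_subset fun j _ => PA j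
  · intro t _
    by_cases ht : ∃ j, t ∈ P j
    · obtain ⟨j, hj⟩ := ht
      refine le_trans ?_ (hcap j)
      rw [← Finset.sum_filter_add_sum_filter_not Finset.univ (fun i => i ∈ B j)]
      have e : Finset.univ.filter (fun i => i ∈ B j) = B j := by ext; simp
      have z : ∑ i ∈ Finset.univ.filter (fun i => i ∉ B j),
          (⋃ j ∈ Finset.univ.filter (fun j => i ∈ B j), P j).indicator (fun _ => d i) t = 0 := by
        refine Finset.sum_eq_zero fun i hi => indicator_of_notMem ?_ _
        simp only [Finset.mem_filter, Finset.mem_univ, true_and] at hi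
        simp only [Finset.mem_filter, Finset.mem_univ, true_and, mem_iUnion, not_exists]
        intro l hl htl
        rw [Pun l j t htl hj] at hl
        exact hi hl
      rw [z, e, add_zero]
      exact Finset.sum_le_sum fun i _ => indicator_apply_le' (fun _ => le_rfl) fun _ => (hd i).le
    · refine le_trans (Finset.sum_eq_zero fun i _ => indicator_of_notMem ?_ _).le hS.le
      simp only [mem_iUnion, not_exists]
      exact fun l _ htl => ht ⟨l, htl⟩
  · intro i
    have := hfin i
    have hX : (u i).real (⋃ j ∈ Finset.univ.filter (fun j => i ∈ B j), P j) =
        (∑ j ∈ Finset.univ.filter (fun j => i ∈ B j), lam j) * (u i).real (Icc 0 T) := by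
      rw [measureReal_biUnion_finset, Finset.sum_mul]
      · exact Finset.sum_congr rfl fun j _ => Pv i j
      · intro a _ b _ hab
        exact Set.disjoint_left.2 fun x ha hb => hab (Pun a b x ha hb)
      · exact fun j _ => Pmeas j
    rw [← ofReal_measureReal (μ := u i) (s := Icc 0 T), ← ENNReal.ofReal_mul' measureReal_nonneg,
      ← ofReal_measureReal (μ := u i) (h := measure_ne_top _ _), hX]
    exact ENNReal.ofReal_le_ofReal (mul_le_mul_of_nonneg_right (hcov i) measureReal_nonneg)
end

section
/- Let n ≥ 2, and consider the electricity division instance on the interval [0,1] with supply S = n-1, agents 1, …, n-1 each having demand 1, and agent n having demand n-1. Let v_1, …, v_{n-1} be nonatomic Borel probability measures on [0,1] and let v_n := (v_1 + ⋯ + v_{n-1})/(n-1). Then every feasible allocation X_1, …, X_n satisfies min over all agents i of v_i(X_i) ≤ 1/2; that is, the egalitarian value of this instance is at most 1/2. -/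
open MeasureTheory Set

/-- The electricity instance constructed in the reduction (supply `n-1`; agents `0,…,n-2`
with demand 1 and nonatomic probability utilities on `[0,1]`; last agent with demand `n-1`
and utility equal to the average of the others) has egalitarian value at most `1/2`:
every feasible allocation gives some agent utility at most `1/2`. -/
theorem reduction_instance_egalitarian_at_most_half
    (n : ℕ) (hn : 2 ≤ n)
    (v : Fin n → Measure ℝ)
    (hprob : ∀ i : Fin n, (i : ℕ) < n - 1 → IsProbabilityMeasure (v i))
    (hsupp : ∀ i : Fin n, (i : ℕ) < n - 1 → v i (Set.Icc 0 1) = 1)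
    (hatom : ∀ i : Fin n, (i : ℕ) < n - 1 → NoAtoms (v i))
    (hlast : ∀ s : Set ℝ, MeasurableSet s →
      v ⟨n - 1, by omega⟩ s =
        ((n - 1 : ℕ) : ENNReal)⁻¹ *
          ∑ i ∈ Finset.univ.filter (fun i : Fin n => (i : ℕ) < n - 1), v i s)
    (X : Fin n → Set ℝ)
    (hmeas : ∀ i, MeasurableSet (X i))
    (hsub : ∀ i, X i ⊆ Set.Icc 0 1)
    (hfeas : ∀ t ∈ Set.Icc (0 : ℝ) 1,
      ∑ i, (X i).indicator
        (fun _ => if (i : ℕ) < n - 1 then (1 : ℝ) else ((n - 1 : ℕ) : ℝ)) t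
        ≤ ((n - 1 : ℕ) : ℝ)) :
    ∃ i, v i (X i) ≤ (1 / 2 : ENNReal) := by
  by_contra! hcon
  set l : Fin n := ⟨n - 1, by omega⟩ with hl
  have hdisj : ∀ i : Fin n, (i : ℕ) < n - 1 → Disjoint (X i) (X l) := by
    intro i hi
    rw [Set.disjoint_left]
    intro t hti htl
    have hil : i ≠ l := by
      intro h
      rw [h, hl] at hi
      simp at hi
    have h1 := hfeas t (hsub i hti)
    have h2 := Finset.sum_le_sum_of_subset_of_nonneg
      (f := fun i : Fin n => (X i).indicator
        (fun _ => if (i : ℕ) < n - 1 then (1 : ℝ) else ((n - 1 : ℕ) : ℝ)) t)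
      (Finset.subset_univ {i, l}) (by
        intro j _ _
        apply Set.indicator_nonneg
        intro _ _
        split_ifs <;> positivity)
    rw [Finset.sum_pair hil, Set.indicator_of_mem hti, Set.indicator_of_mem htl, if_pos hi,
      if_neg (by simp [hl])] at h2
    linarith
  have hle : ∀ i : Fin n, (i : ℕ) < n - 1 → v i (X l) ≤ 1 / 2 := by
    intro i hi
    haveI := hprob i hi
    have h1 : v i (X i) + v i (X l) ≤ 1 := by
      rw [← measure_union (hdisj i hi) (hmeas l)]
      exact prob_le_one
    by_contra! h2
    have h3 := ENNReal.add_lt_add (hcon i) h2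
    rw [ENNReal.add_halves] at h3
    exact absurd h1 (not_le.mpr h3)
  have hcard : (Finset.univ.filter (fun i : Fin n => (i : ℕ) < n - 1)).card = n - 1 := by
    rw [Fin.card_filter_val_lt]
    omega
  have hsum : ∑ i ∈ Finset.univ.filter (fun i : Fin n => (i : ℕ) < n - 1), v i (X l)
      ≤ ((n - 1 : ℕ) : ENNReal) * (1 / 2) := by
    have := Finset.sum_le_card_nsmul (Finset.univ.filter (fun i : Fin n => (i : ℕ) < n - 1))
      (fun i => v i (X l)) (1 / 2) (fun i hi => hle i (by simpa using hi))
    rwa [hcard, nsmul_eq_mul] at this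
  have hfin : v l (X l) ≤ 1 / 2 := by
    rw [hlast _ (hmeas l)]
    calc _ ≤ ((n - 1 : ℕ) : ENNReal)⁻¹ * (((n - 1 : ℕ) : ENNReal) * (1 / 2)) := by gcongr
      _ = 1 / 2 := by
        rw [← mul_assoc, ENNReal.inv_mul_cancel, one_mul]
        · exact_mod_cast (by omega : n - 1 ≠ 0)
        · exact ENNReal.natCast_ne_top _
  exact absurd hfin (not_le.mpr (hcon l))
end

section
/- Let n agents have demands d_1, …, d_n > 0 with d_1 + ⋯ + d_n = 2S for supply S > 0. Then there exists a feasible allocation X_1, …, X_n of [0,T] with λ(X_i) ≥ T/2 for every agent i if and only if {1,…,n} can be partitioned into two sets A and B such that the sum of d_i over i ∈ A is at most S and the sum of d_i over i ∈ B is at most S. -/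
open MeasureTheory Set

/-- Reduction from Partition: when the total demand equals `2S`, every agent can be
connected at least half of the time iff the demands can be split into two sets each
of total demand at most `S`. -/
theorem half_time_allocation_iff_partition
    (n : ℕ) (d : Fin n → ℝ) (S T : ℝ)
    (hd : ∀ i, 0 < d i) (hS : 0 < S) (hT : 0 < T)
    (hsum : ∑ i, d i = 2 * S) :
    (∃ X : Fin n → Set ℝ,
      (∀ i, MeasurableSet (X i)) ∧
      (∀ i, X i ⊆ Set.Icc 0 T) ∧
      (∀ t ∈ Set.Icc (0 : ℝ) T, ∑ i, (X i).indicator (fun _ => d i) t ≤ S) ∧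
      (∀ i, ENNReal.ofReal (T / 2) ≤ volume (X i))) ↔
    (∃ A : Finset (Fin n), ∑ i ∈ A, d i ≤ S ∧ ∑ i ∈ Aᶜ, d i ≤ S) := by
  classical
  constructor
  · rintro ⟨X, hm, hsub, hfe, hv⟩
    have hvS : volume (Icc (0:ℝ) T) = ENNReal.ofReal T := by simp
    have hint : ∀ i ∈ Finset.univ, IntegrableOn
        ((X i).indicator (fun _ => d i)) (Icc (0:ℝ) T) volume := by
      intro i _
      have : IntegrableOn (fun _ : ℝ => d i) (Icc (0:ℝ) T) volume := by
        apply integrableOn_const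
        · rw [hvS]; exact ENNReal.ofReal_ne_top
        · simp
      exact Integrable.indicator this (hm i)
    have hX : ∀ i, T / 2 * d i ≤ ∫ t in Icc (0:ℝ) T, (X i).indicator (fun _ => d i) t := by
      intro i
      rw [setIntegral_indicator (hm i), inter_eq_right.mpr (hsub i), setIntegral_const,
        smul_eq_mul]
      apply mul_le_mul_of_nonneg_right _ (hd i).le
      have hfin : volume (X i) ≠ ⊤ := by
        apply ne_top_of_le_ne_top _ (measure_mono (hsub i))
        rw [hvS]; exact ENNReal.ofReal_ne_top
      exact (ENNReal.ofReal_le_iff_le_toReal hfin).mp (hv i)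
    have hI : T * S ≤ ∫ t in Icc (0:ℝ) T, ∑ i, (X i).indicator (fun _ => d i) t := by
      rw [integral_finsetSum _ hint]
      calc T * S = ∑ i, T / 2 * d i := by rw [← Finset.mul_sum, hsum]; ring
        _ ≤ _ := Finset.sum_le_sum (fun i _ => hX i)
    obtain ⟨t, ht, hle⟩ := exists_setAverage_le (μ := volume) (s := Icc (0:ℝ) T)
      (f := fun t => ∑ i, (X i).indicator (fun _ => d i) t)
      (by rw [hvS]; simpa using hT) (by rw [hvS]; exact ENNReal.ofReal_ne_top)
      (integrable_finsetSum _ hint)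
    have hr : volume.real (Icc (0:ℝ) T) = T := by
      simp [Measure.real, hT.le]
    rw [setAverage_eq, hr, smul_eq_mul, inv_mul_le_iff₀ hT] at hle
    have hge : S ≤ ∑ i, (X i).indicator (fun _ => d i) t :=
      le_of_mul_le_mul_left (hI.trans hle) hT
    have hEq : ∑ i ∈ Finset.univ.filter (fun i => t ∈ X i), d i
        = ∑ i, (X i).indicator (fun _ => d i) t := by
      rw [Finset.sum_filter]
      exact Finset.sum_congr rfl (fun i _ => by simp [indicator])
    refine ⟨Finset.univ.filter (fun i => t ∈ X i), ?_, ?_⟩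
    · rw [hEq]; exact hfe t ht
    · have := Finset.sum_add_sum_compl (Finset.univ.filter (fun i => t ∈ X i)) d
      linarith
  · rintro ⟨A, hA, hB⟩
    refine ⟨fun i => if i ∈ A then Icc 0 (T / 2) else Ioc (T / 2) T, ?_, ?_, ?_, ?_⟩
    · intro i
      dsimp only
      split_ifs
      · exact measurableSet_Icc
      · exact measurableSet_Ioc
    · intro i
      dsimp only
      split_ifs
      · exact Icc_subset_Icc le_rfl (by linarith)
      · intro x hx
        exact ⟨by linarith [hx.1], hx.2⟩
    · intro t ht
      by_cases h : t ≤ T / 2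
      · refine le_trans (le_of_eq ?_) hA
        rw [← Finset.sum_add_sum_compl A, Finset.sum_eq_zero (s := Aᶜ), add_zero]
        · refine Finset.sum_congr rfl (fun i hi => ?_)
          simp [hi, indicator, ht.1, h]
        · intro i hi
          simp [Finset.mem_compl.mp hi, indicator, h]
      · refine le_trans (le_of_eq ?_) hB
        rw [← Finset.sum_add_sum_compl A, Finset.sum_eq_zero (s := A), zero_add]
        · refine Finset.sum_congr rfl (fun i hi => ?_)
          simp [Finset.mem_compl.mp hi, indicator, ht.2, not_le.mp h]
        · intro i hi
          simp [hi, indicator, h]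
    · intro i
      dsimp only
      split_ifs
      · simp
      · rw [Real.volume_Ioc]
        exact ENNReal.ofReal_le_ofReal (by linarith)
end

section
/- Let n agents have demands d_1, …, d_n > 0 and supply S > 0, and suppose there is a q-times bin packing with k bins: subsets B_1, …, B_k of {1,…,n} such that for each j the sum of d_i over i ∈ B_j is at most S, and every agent belongs to at least q of the sets. Let v_1, …, v_n be finite Borel measures on [0,T] (agents' additive utilities), and suppose P_1, …, P_k is a measurable partition of [0,T] that is a k-consensus division for agents 1, …, n-1, i.e., v_i(P_j) = (1/k)·v_i([0,T]) for every i ∈ {1,…,n-1} and every j ∈ {1,…,k}. Then there exists a bijection σ of {1,…,k} such that the allocation X_i := union of P_{σ(j)} over all bins B_j containing i is feasible and satisfies v_i(X_i) ≥ (q/k)·v_i([0,T]) for every agent i ∈ {1,…,n} (with equality for agents 1, …, n-1 that belong to exactly q bins). -/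
open MeasureTheory Set

theorem exists_perm_avg (k : ℕ) [NeZero k] (f : Fin k → ENNReal) (J : Finset (Fin k)) :
    ∃ σ : Equiv.Perm (Fin k), (J.card : ENNReal) / k * ∑ j, f j ≤ ∑ j ∈ J, f (σ j) := by
  by_contra hcon
  push Not at hcon
  have hk0 : (k : ENNReal) ≠ 0 := by exact_mod_cast NeZero.ne k
  have hkt : (k : ENNReal) ≠ ⊤ := ENNReal.natCast_ne_top k
  have h1 : ∑ c : Fin k, ∑ j ∈ J, f (Equiv.addRight c j)
      < ∑ c : Fin k, (J.card : ENNReal) / k * ∑ j, f j :=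
    ENNReal.sum_lt_sum_of_nonempty Finset.univ_nonempty (fun c _ => hcon (Equiv.addRight c))
  have h2 : ∑ c : Fin k, ∑ j ∈ J, f (Equiv.addRight c j) = J.card * ∑ j, f j := by
    rw [Finset.sum_comm]
    have : ∀ j ∈ J, ∑ c : Fin k, f (Equiv.addRight c j) = ∑ j, f j := by
      intro j _
      exact Equiv.sum_comp (Equiv.addLeft j) f
    rw [Finset.sum_congr rfl this, Finset.sum_const, nsmul_eq_mul]
  have h3 : ∑ c : Fin k, (J.card : ENNReal) / k * ∑ j, f j = J.card * ∑ j, f j := by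
    rw [Finset.sum_const, nsmul_eq_mul, Finset.card_univ, Fintype.card_fin, ← mul_assoc,
      ENNReal.mul_div_cancel hk0 hkt]
  rw [h2, h3] at h1
  exact lt_irrefl _ h1

/-- Combining a `q`-times bin packing with `k` bins and a `k`-consensus division
`P 1, …, P k` of `[0,T]` for agents `0, …, n-2`: some bijection `σ` of the bins to the
pieces yields, via `X i := ⋃ {P (σ j) | i ∈ B j}`, a feasible allocation giving every
agent at least a `q/k` fraction of his total utility, with equality for each of the
agents `0, …, n-2` belonging to exactly `q` bins. -/
theorem consensus_division_q_times_bin_packing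
    (n k q : ℕ) (d : Fin n → ℝ) (S T : ℝ)
    (hd : ∀ i, 0 < d i) (hS : 0 < S) (hT : 0 < T)
    (B : Fin k → Finset (Fin n))
    (hcap : ∀ j, ∑ i ∈ B j, d i ≤ S)
    (hcov : ∀ i, q ≤ (Finset.univ.filter fun j => i ∈ B j).card)
    (v : Fin n → Measure ℝ)
    (hfin : ∀ i, IsFiniteMeasure (v i))
    (P : Fin k → Set ℝ)
    (hPmeas : ∀ j, MeasurableSet (P j))
    (hPdisj : ∀ j j', j ≠ j' → Disjoint (P j) (P j'))
    (hPcover : (⋃ j, P j) = Set.Icc 0 T)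
    (hcons : ∀ i : Fin n, (i : ℕ) < n - 1 →
      ∀ j, v i (P j) = ((k : ENNReal))⁻¹ * v i (Set.Icc 0 T)) :
    ∃ σ : Equiv.Perm (Fin k), ∃ X : Fin n → Set ℝ,
      (∀ i, X i = ⋃ j ∈ Finset.univ.filter (fun j => i ∈ B j), P (σ j)) ∧
      (∀ t ∈ Set.Icc (0 : ℝ) T, ∑ i, (X i).indicator (fun _ => d i) t ≤ S) ∧
      (∀ i, (q : ENNReal) / (k : ENNReal) * v i (Set.Icc 0 T) ≤ v i (X i)) ∧
      (∀ i : Fin n, (i : ℕ) < n - 1 →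
        (Finset.univ.filter fun j => i ∈ B j).card = q →
        v i (X i) = (q : ENNReal) / (k : ENNReal) * v i (Set.Icc 0 T)) := by
  have hk : k ≠ 0 := by
    rintro rfl
    have h0 : (0 : ℝ) ∈ Set.Icc 0 T := ⟨le_rfl, hT.le⟩
    rw [← hPcover] at h0
    simp at h0
  haveI : NeZero k := ⟨hk⟩
  have htot : ∀ i, v i (Set.Icc 0 T) = ∑ j, v i (P j) := by
    intro i
    rw [← hPcover, measure_iUnion (fun a b hab => hPdisj a b hab) hPmeas, tsum_fintype]
  have hX : ∀ (σ : Equiv.Perm (Fin k)) (i : Fin n),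
      v i (⋃ j ∈ Finset.univ.filter (fun j => i ∈ B j), P (σ j))
        = ∑ j ∈ Finset.univ.filter (fun j => i ∈ B j), v i (P (σ j)) := by
    intro σ i
    refine measure_biUnion_finset ?_ (fun j _ => hPmeas _)
    intro a _ b _ hab
    exact hPdisj _ _ (fun h => hab (σ.injective h))
  have heq : ∀ (σ : Equiv.Perm (Fin k)) (i : Fin n), (i : ℕ) < n - 1 →
      ∑ j ∈ Finset.univ.filter (fun j => i ∈ B j), v i (P (σ j))
        = ((Finset.univ.filter (fun j => i ∈ B j)).card : ENNReal) / k * v i (Set.Icc 0 T) := by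
    intro σ i hi
    rw [Finset.sum_congr rfl (fun j _ => hcons i hi (σ j)), Finset.sum_const, nsmul_eq_mul,
      ← mul_assoc, div_eq_mul_inv]
  have hmono : ∀ i : Fin n, (q : ENNReal) / k * v i (Set.Icc 0 T) ≤
      ((Finset.univ.filter (fun j => i ∈ B j)).card : ENNReal) / k * v i (Set.Icc 0 T) := by
    intro i
    have : (q : ENNReal) ≤ ((Finset.univ.filter (fun j => i ∈ B j)).card : ENNReal) := by
      exact_mod_cast hcov i
    gcongr
  have hσ : ∃ σ : Equiv.Perm (Fin k), ∀ i : Fin n, ¬ (i : ℕ) < n - 1 →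
      ((Finset.univ.filter (fun j => i ∈ B j)).card : ENNReal) / k * v i (Set.Icc 0 T)
        ≤ ∑ j ∈ Finset.univ.filter (fun j => i ∈ B j), v i (P (σ j)) := by
    by_cases hn : n = 0
    · subst hn
      exact ⟨1, fun i => i.elim0⟩
    · obtain ⟨σ, h⟩ := exists_perm_avg k
        (fun j => v (⟨n - 1, by omega⟩ : Fin n) (P j))
        (Finset.univ.filter (fun j => (⟨n - 1, by omega⟩ : Fin n) ∈ B j))
      refine ⟨σ, fun i hi => ?_⟩
      have hii : i = ⟨n - 1, by omega⟩ := Fin.ext (by have := i.2; simp; omega)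
      rw [hii, htot]
      exact h
  obtain ⟨σ, hσ⟩ := hσ
  refine ⟨σ, fun i => ⋃ j ∈ Finset.univ.filter (fun j => i ∈ B j), P (σ j),
    fun i => rfl, ?_, ?_, ?_⟩
  · intro t ht
    rw [← hPcover] at ht
    obtain ⟨m, hm⟩ := Set.mem_iUnion.1 ht
    refine le_trans (le_of_eq ?_) (hcap (σ.symm m))
    have key : ∀ i : Fin n, t ∈ (⋃ j ∈ Finset.univ.filter (fun j => i ∈ B j), P (σ j))
        ↔ i ∈ B (σ.symm m) := by
      intro i
      simp only [Set.mem_iUnion, Finset.mem_filter, Finset.mem_univ, true_and, exists_prop]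
      constructor
      · rintro ⟨j, hj, htj⟩
        have : σ j = m := by
          by_contra hne
          exact Set.disjoint_left.1 (hPdisj _ _ hne) htj hm
        rw [← this, Equiv.symm_apply_apply]
        exact hj
      · intro h
        exact ⟨σ.symm m, h, by rwa [Equiv.apply_symm_apply]⟩
    classical
    simp only [Set.indicator_apply, key]
    rw [Finset.sum_ite_mem, Finset.univ_inter]
  · intro i
    refine (hmono i).trans ?_
    simp only [hX]
    by_cases hi : (i : ℕ) < n - 1
    · exact (heq σ i hi).ge
    · exact hσ i hi
  · intro i hi hc
    simp only [hX]
    rw [heq σ i hi, hc]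
end
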